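/- Let n ≥ 1 and let G ∈ 𝒢_{n,1} be reduced. For every nontrivial strong component G_p (a directed cycle of length ℓ_p) and every integer j with j ≥ 1 and j > d_p − ℓ_p: V_p⁺(j + ℓ_p) = V_p⁺(j), and V_p⁺ is the disjoint union of the sets V_p⁺(j), V_p⁺(j+1), …, V_p⁺(j + ℓ_p − 1). -/

import Mathlib

open MeasureTheory

/-- Node type for digraphs in `𝒢_{n,1}`: `none` is the control node `β`,
`some i` is the state node `α_i`. -/
abbrev Node (n : ℕ) := Option (Fin n)

/-- `w` is a walk of length `k` from `u` to `v` in the digraph with edge set `E`. -/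
def IsWalk {V : Type*} (E : Set (V × V)) (k : ℕ) (w : ℕ → V) (u v : V) : Prop :=
  w 0 = u ∧ w k = v ∧ ∀ t < k, (w t, w (t + 1)) ∈ E

/-- A path is a walk with no repeated node. -/
def IsPath {V : Type*} (E : Set (V × V)) (k : ℕ) (w : ℕ → V) (u v : V) : Prop :=
  IsWalk E k w u v ∧ ∀ s ≤ k, ∀ t ≤ k, w s = w t → s = t

/-- A cycle of length `k ≥ 1` from `u` to itself, all nodes pairwise distinct except
the coinciding endpoints. -/
def IsCycle {V : Type*} (E : Set (V × V)) (k : ℕ) (w : ℕ → V) (u : V) : Prop :=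
  1 ≤ k ∧ IsWalk E k w u u ∧ ∀ s < k, ∀ t < k, w s = w t → s = t

def Reachable {V : Type*} (E : Set (V × V)) (u v : V) : Prop :=
  ∃ k w, IsWalk E k w u v

/-- `u` lies on a cycle of the digraph. -/
def OnCycle {V : Type*} (E : Set (V × V)) (u : V) : Prop :=
  ∃ k w, IsCycle E k w u

def WeaklyConnected {V : Type*} (E : Set (V × V)) : Prop :=
  ∀ u v : V, ∃ (k : ℕ) (w : ℕ → V), w 0 = u ∧ w k = v ∧
    ∀ t < k, (w t, w (t + 1)) ∈ E ∨ (w (t + 1), w t) ∈ E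

/-- Membership in the class `𝒢_{n,1}`: no edge ends at `β` and the digraph is
weakly connected. -/
def MemG (n : ℕ) (E : Set (Node n × Node n)) : Prop :=
  (∀ e ∈ E, e.2 ≠ (none : Node n)) ∧ WeaklyConnected E

/-- `V⁺_cyc`: nodes reachable by a walk from some node lying on a cycle. -/
def CycSucc {V : Type*} (E : Set (V × V)) : Set V :=
  {v | ∃ u, OnCycle E u ∧ Reachable E u v}

/-- The node set of the core relative to a node set `N`: `N \ V⁺_cyc`. -/
def CoreOn {W : Type*} (N : Set W) (F : Set (W × W)) : Set W := N \ CycSucc F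

/-- The node set `V*` of the core `G*` of `G`. -/
def CoreNodes (n : ℕ) (E : Set (Node n × Node n)) : Set (Node n) :=
  CoreOn Set.univ E

/-- The core of `G` contains a directed spanning path: a path of `G` whose node set
is exactly `V*`. -/
def HasCoreSpanningPath (n : ℕ) (E : Set (Node n × Node n)) : Prop :=
  ∃ (k : ℕ) (w : ℕ → Node n) (u v : Node n), IsPath E k w u v ∧
    {x | ∃ t ≤ k, w t = x} = CoreNodes n E

/-- A compliant pair `(A, b) ∈ 𝕍(G)`: bounded continuous, with the sparsity
pattern dictated by the edge set `E`. -/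
def Compliant {n : ℕ} {S : Type*} [TopologicalSpace S] (E : Set (Node n × Node n))
    (A : S → Fin n → Fin n → ℝ) (b : S → Fin n → ℝ) : Prop :=
  Continuous A ∧ Continuous b ∧
  (∃ C, ∀ σ i j, |A σ i j| ≤ C) ∧ (∃ C, ∀ σ i, |b σ i| ≤ C) ∧
  (∀ σ (i j : Fin n), ((some j : Node n), (some i : Node n)) ∉ E → A σ i j = 0) ∧
  (∀ σ (i : Fin n), ((none : Node n), (some i : Node n)) ∉ E → b σ i = 0)

/-- The averaged-controllability rank criterion: the span of the Bochner integrals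
`∫ A(σ)^k b(σ) dμ`, `k ∈ ℕ`, is all of `ℝⁿ`. -/
def RankCriterion {n : ℕ} {S : Type*} [MeasurableSpace S]
    (μ : Measure S) (A : S → Fin n → Fin n → ℝ) (b : S → Fin n → ℝ) : Prop :=
  Submodule.span ℝ {x : Fin n → ℝ |
    ∃ k : ℕ, x = ∫ σ, (Matrix.of (A σ) ^ k).mulVec (b σ) ∂μ} = ⊤

/-- `S` is a topological manifold of dimension `d`. -/
def IsTopManifold (d : ℕ) (S : Type*) [TopologicalSpace S] : Prop :=
  ∀ x : S, ∃ U : Set S, IsOpen U ∧ x ∈ U ∧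
    ∃ W : Set (EuclideanSpace ℝ (Fin d)), IsOpen W ∧ Nonempty (↥U ≃ₜ ↥W)

/-- The support of `μ` contains a nonempty open set. -/
def SupportHasOpen {S : Type*} [TopologicalSpace S] [MeasurableSpace S]
    (μ : Measure S) : Prop :=
  ∃ U : Set S, IsOpen U ∧ U.Nonempty ∧ ∀ W ⊆ U, IsOpen W → W.Nonempty → 0 < μ W

/-- There is exactly one path from `u` to `v`. -/
def UniquePathFrom {V : Type*} (E : Set (V × V)) (u v : V) : Prop :=
  (∃ k w, IsPath E k w u v) ∧
  ∀ (k : ℕ) (w : ℕ → V) (k' : ℕ) (w' : ℕ → V),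
    IsPath E k w u v → IsPath E k' w' u v → k = k' ∧ ∀ t ≤ k, w t = w' t

/-- A directed tree on the node set `N`: there is a unique root, from which every node
is reachable by a unique path. -/
def IsDirectedTree {W : Type*} (N : Set W) (F : Set (W × W)) : Prop :=
  ∃ r ∈ N, (∀ v ∈ N, UniquePathFrom F r v) ∧
    (∀ r' ∈ N, (∀ v ∈ N, Reachable F r' v) → r' = r)

/-- The strong component of `u`: nodes mutually reachable with `u`. -/
def StrongComp {V : Type*} (E : Set (V × V)) (u : V) : Set V :=
  {v | Reachable E u v ∧ Reachable E v u}

/-- The nodes of the skeleton graph (condensation): the strong components. -/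
def SkelNodes {V : Type*} (E : Set (V × V)) : Set (Set V) :=
  {C | ∃ u, C = StrongComp E u}

/-- The edges of the skeleton graph: `(C, C')` is an edge whenever some edge of `E`
goes from a node of `C` to a node of `C'`. -/
def SkelEdges {V : Type*} (E : Set (V × V)) : Set (Set V × Set V) :=
  {p | p.1 ∈ SkelNodes E ∧ p.2 ∈ SkelNodes E ∧ ∃ u ∈ p.1, ∃ v ∈ p.2, (u, v) ∈ E}

/-- The induced subgraph on `N` (w.r.t. the ambient edge set `F`) is a directed path:
its nodes can be ordered `w 0, …, w r` so that its edges are exactly the consecutive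
pairs. -/
def IsPathGraphOn {W : Type*} (N : Set W) (F : Set (W × W)) : Prop :=
  ∃ (r : ℕ) (w : ℕ → W), (∀ s ≤ r, ∀ t ≤ r, w s = w t → s = t) ∧
    {x | ∃ t ≤ r, w t = x} = N ∧
    (∀ p : W × W, (p ∈ F ∧ p.1 ∈ N ∧ p.2 ∈ N) ↔ ∃ t < r, p = (w t, w (t + 1)))

/-- The induced subgraph on `C` is a single directed cycle: its nodes can be cyclically
ordered so that its edges are exactly the consecutive pairs. -/
def IsSingleCycleOn {V : Type*} (C : Set V) (E : Set (V × V)) : Prop :=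
  ∃ (l : ℕ) (w : ℕ → V), 1 ≤ l ∧ (∀ s < l, ∀ t < l, w s = w t → s = t) ∧
    {x | ∃ t < l, w t = x} = C ∧
    (∀ p : V × V, (p ∈ E ∧ p.1 ∈ C ∧ p.2 ∈ C) ↔ ∃ t < l, p = (w t, w ((t + 1) % l)))

/-- `G ∈ 𝒢_{n,1}` is reduced (Definition 5 of the paper): (1) the skeleton graph `S`
with self-loops removed is a directed tree and the core `S*` of `S` is a directed path;
(2) every edge of `S` between distinct components comes from a unique edge of `G`;
(3) every node of `S` with a self-loop is an out-neighbor of `S*`, and every nontrivial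
strong component of `G` is a single directed cycle. -/
def ReducedGraph (n : ℕ) (E : Set (Node n × Node n)) : Prop :=
  MemG n E ∧
  IsDirectedTree (SkelNodes E) {p ∈ SkelEdges E | p.1 ≠ p.2} ∧
  IsPathGraphOn (CoreOn (SkelNodes E) (SkelEdges E)) (SkelEdges E) ∧
  (∀ p ∈ SkelEdges E, p.1 ≠ p.2 →
    ∃! e : Node n × Node n, e ∈ E ∧ e.1 ∈ p.1 ∧ e.2 ∈ p.2) ∧
  (∀ C : Set (Node n), (C, C) ∈ SkelEdges E →
    (∃ C' ∈ CoreOn (SkelNodes E) (SkelEdges E), (C', C) ∈ SkelEdges E) ∧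
    IsSingleCycleOn C E)

/-- `V(j)`: nodes reachable from `β` by a walk of length `j`. -/
def VSet {n : ℕ} (E : Set (Node n × Node n)) (j : ℕ) : Set (Node n) :=
  {v | ∃ w : ℕ → Node n, IsWalk E j w (none : Node n) v}

/-- `V_p⁺`: nodes reachable by a walk from some node of the component `C`. -/
def VpPlus {n : ℕ} (E : Set (Node n × Node n)) (C : Set (Node n)) : Set (Node n) :=
  {v | ∃ u ∈ C, Reachable E u v}

section Helpers

open Relation

/-- one-step relation -/
def hStep {V : Type*} (E : Set (V × V)) : V → V → Prop := fun a b => (a, b) ∈ E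

lemma walk_rtg {V : Type*} {E : Set (V × V)} (w : ℕ → V) (i : ℕ) :
    ∀ t, (∀ s < t, (w (i + s), w (i + s + 1)) ∈ E) → ReflTransGen (hStep E) (w i) (w (i + t)) := by
  intro t
  induction t with
  | zero => intro _; exact ReflTransGen.refl
  | succ t ih =>
    intro h
    exact (ih fun s hs => h s (by omega)).tail (h t (by omega))

lemma reach_iff {V : Type*} {E : Set (V × V)} {u v : V} :
    Reachable E u v ↔ ReflTransGen (hStep E) u v := by
  constructor
  · rintro ⟨k, w, h0, hk, h⟩
    have := walk_rtg (E := E) w 0 k (by simpa using h)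
    simpa [h0, hk] using this
  · intro h
    induction h with
    | refl => exact ⟨0, fun _ => u, rfl, rfl, by simp⟩
    | @tail b d _ hbd ih =>
      obtain ⟨k, w, h0, hk, h⟩ := ih
      refine ⟨k + 1, fun t => if t ≤ k then w t else d, by simp [h0], by simp, ?_⟩
      intro t ht
      rcases Nat.lt_or_ge t k with h1 | h1
      · have h2 : t ≤ k := by omega
        have h3 : t + 1 ≤ k := by omega
        simp only [h2, h3, if_true]
        exact h t h1
      · have h2 : t = k := by omega
        subst h2
        simpa [hk, hStep] using hbd

lemma mem_sc {V : Type*} {E : Set (V × V)} {u v : V} :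
    v ∈ StrongComp E u ↔ ReflTransGen (hStep E) u v ∧ ReflTransGen (hStep E) v u := by
  unfold StrongComp
  simp only [Set.mem_setOf_eq, reach_iff]

lemma sc_self {V : Type*} (E : Set (V × V)) (u : V) : u ∈ StrongComp E u :=
  mem_sc.2 ⟨.refl, .refl⟩

lemma sc_eq {V : Type*} {E : Set (V × V)} {u v : V} (h : v ∈ StrongComp E u) :
    StrongComp E v = StrongComp E u := by
  rw [mem_sc] at h
  ext x
  rw [mem_sc, mem_sc]
  exact ⟨fun hx => ⟨h.1.trans hx.1, hx.2.trans h.2⟩, fun hx => ⟨h.2.trans hx.1, hx.2.trans h.1⟩⟩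

lemma skel_edge {V : Type*} {E : Set (V × V)} {u v : V} (h : (u, v) ∈ E) :
    (StrongComp E u, StrongComp E v) ∈ SkelEdges E :=
  ⟨⟨u, rfl⟩, ⟨v, rfl⟩, u, sc_self E u, v, sc_self E v, h⟩

lemma skel_reach {V : Type*} {E : Set (V × V)} {u v : V} (h : ReflTransGen (hStep E) u v) :
    ReflTransGen (hStep (SkelEdges E)) (StrongComp E u) (StrongComp E v) := by
  induction h with
  | refl => exact .refl
  | tail _ hbd ih => exact ih.tail (skel_edge hbd)

lemma skel_lift {V : Type*} {E : Set (V × V)} {P : Set V} {u : V}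
    (h : ReflTransGen (hStep {p ∈ SkelEdges E | p.1 ≠ p.2}) (StrongComp E u) P) :
    ∀ v ∈ P, ReflTransGen (hStep E) u v := by
  induction h with
  | refl => intro v hv; exact (mem_sc.1 hv).1
  | @tail B D _ hbd ih =>
    intro v hv
    obtain ⟨⟨_, ⟨y, hy⟩, a, ha, b, hb, hab⟩, _⟩ := hbd
    simp only at hy ha hb
    subst hy
    have h1 := ih a ha
    exact (h1.tail hab).trans ((mem_sc.1 hb).2.trans (mem_sc.1 hv).1)

lemma extend_path {W : Type*} {F : Set (W × W)} {k : ℕ} {w : ℕ → W} {r P D : W}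
    (hw : IsPath F k w r P) (hPD : (P, D) ∈ F) (hD : ∀ t ≤ k, w t ≠ D) :
    IsPath F (k + 1) (fun t => if t ≤ k then w t else D) r D := by
  obtain ⟨⟨h0, hk, h⟩, hinj⟩ := hw
  refine ⟨⟨by simp [h0], by simp, ?_⟩, ?_⟩
  · intro t ht
    rcases Nat.lt_or_ge t k with h1 | h1
    · have h2 : t ≤ k := by omega
      have h3 : t + 1 ≤ k := by omega
      simp only [h2, h3, if_true]
      exact h t h1
    · have h2 : t = k := by omega
      subst h2
      simpa [hk] using hPD
  · intro s hs t ht hst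
    simp only at hst
    split_ifs at hst with h1 h2 h2
    · exact hinj s h1 t h2 hst
    · exact absurd hst (hD s h1)
    · exact absurd hst.symm (hD t h2)
    · omega

lemma tree_edge {V : Type*} {E : Set (V × V)}
    (htree : IsDirectedTree (SkelNodes E) {p ∈ SkelEdges E | p.1 ≠ p.2})
    (huniq : ∀ p ∈ SkelEdges E, p.1 ≠ p.2 → ∃! e : V × V, e ∈ E ∧ e.1 ∈ p.1 ∧ e.2 ∈ p.2)
    {x u v u' v' : V} (h : (u, v) ∈ E) (h' : (u', v') ∈ E)
    (hv : v ∈ StrongComp E x) (hv' : v' ∈ StrongComp E x)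
    (hu : u ∉ StrongComp E x) (hu' : u' ∉ StrongComp E x) : u = u' ∧ v = v' := by
  obtain ⟨r, _, hr, _⟩ := htree
  have key : ∀ a b, (a, b) ∈ E → b ∈ StrongComp E x → a ∉ StrongComp E x →
      (StrongComp E a, StrongComp E x) ∈ {p ∈ SkelEdges E | p.1 ≠ p.2} ∧
      ∃ (k : ℕ) (w : ℕ → Set V), w k = StrongComp E a ∧ IsPath {p ∈ SkelEdges E | p.1 ≠ p.2} (k + 1)
        (fun t => if t ≤ k then w t else StrongComp E x) r (StrongComp E x) := by
    intro a b hab hb ha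
    have he : (StrongComp E a, StrongComp E x) ∈ {p ∈ SkelEdges E | p.1 ≠ p.2} := by
      refine ⟨sc_eq hb ▸ skel_edge hab, ?_⟩
      intro heq
      simp only at heq
      exact ha (heq ▸ sc_self E a)
    refine ⟨he, ?_⟩
    obtain ⟨⟨k, w, hw⟩, _⟩ := hr (StrongComp E a) ⟨a, rfl⟩
    refine ⟨k, w, hw.1.2.1, extend_path hw he ?_⟩
    intro t ht hD
    have h1 := walk_rtg (E := {p ∈ SkelEdges E | p.1 ≠ p.2}) w t (k - t)
      (fun s hs => hw.1.2.2 (t + s) (by omega))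
    rw [show t + (k - t) = k by omega, hw.1.2.1, hD] at h1
    have h2 := skel_lift h1 a (sc_self E a)
    exact ha (mem_sc.2 ⟨h2, ReflTransGen.head hab (mem_sc.1 hb).2⟩)
  obtain ⟨he, k, w, hk, hp⟩ := key u v h hv hu
  obtain ⟨_, k', w', hk', hp'⟩ := key u' v' h' hv' hu'
  obtain ⟨hkk, hww⟩ := (hr (StrongComp E x) ⟨x, rfl⟩).2 _ _ _ _ hp hp'
  have hkk' : k = k' := by omega
  subst hkk'
  have h3 := hww k (by omega)
  simp only [le_refl, if_true] at h3
  rw [hk, hk'] at h3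
  obtain ⟨e, _, he2⟩ := huniq _ he.1 he.2
  have e1 := he2 (u, v) ⟨h, sc_self E u, hv⟩
  have e2 := he2 (u', v') ⟨h', by simpa [h3] using sc_self E u', hv'⟩
  have := e1.trans e2.symm
  simpa using this

lemma enter {V : Type*} {E : Set (V × V)} {D : Set V} {x y : V}
    (h : ReflTransGen (hStep E) x y) (hx : x ∉ D) (hy : y ∈ D) :
    ∃ u q, (u, q) ∈ E ∧ u ∉ D ∧ q ∈ D ∧ ReflTransGen (hStep E) x u := by
  induction h with
  | refl => exact absurd hy hx
  | @tail b d hb hbd ih =>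
    by_cases hbD : b ∈ D
    · exact ih hbD
    · exact ⟨b, d, hbd, hbD, hy, hb⟩

lemma loop_onCycle {W : Type*} {F : Set (W × W)} {D : W} (h : (D, D) ∈ F) : OnCycle F D :=
  ⟨1, fun _ => D, le_refl _, ⟨rfl, rfl, fun _ _ => h⟩, fun s hs t ht _ => by omega⟩

lemma nontriv_eq {V : Type*} {E : Set (V × V)}
    (htree : IsDirectedTree (SkelNodes E) {p ∈ SkelEdges E | p.1 ≠ p.2})
    (huniq : ∀ p ∈ SkelEdges E, p.1 ≠ p.2 → ∃! e : V × V, e ∈ E ∧ e.1 ∈ p.1 ∧ e.2 ∈ p.2)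
    (hout : ∀ C : Set V, (C, C) ∈ SkelEdges E →
      (∃ C' ∈ CoreOn (SkelNodes E) (SkelEdges E), (C', C) ∈ SkelEdges E) ∧ IsSingleCycleOn C E)
    {x y : V} (hxy : ReflTransGen (hStep E) x y)
    (hx : (StrongComp E x, StrongComp E x) ∈ SkelEdges E)
    (hy : (StrongComp E y, StrongComp E y) ∈ SkelEdges E) : x ∈ StrongComp E y := by
  by_contra hne
  obtain ⟨⟨P, ⟨_, hPc⟩, hPy⟩, _⟩ := hout _ hy
  obtain ⟨⟨z, hz⟩, _, p, hp, q, hq, hpq⟩ := hPy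
  simp only at hz hp hq
  subst hz
  have hpy : p ∉ StrongComp E y := by
    intro h
    have : StrongComp E z = StrongComp E y := (sc_eq hp).symm.trans (sc_eq h)
    exact hPc (this ▸ ⟨_, loop_onCycle hy, reach_iff.2 .refl⟩)
  obtain ⟨u, q', huq, hu, hq', hxu⟩ := enter hxy hne (sc_self E y)
  obtain ⟨rfl, _⟩ := tree_edge htree huniq huq hpq hq' hq hu hpy
  exact hPc ⟨_, loop_onCycle hx, reach_iff.2 (sc_eq hp ▸ skel_reach hxu)⟩

lemma triv_pred {V : Type*} {E : Set (V × V)}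
    (htree : IsDirectedTree (SkelNodes E) {p ∈ SkelEdges E | p.1 ≠ p.2})
    (huniq : ∀ p ∈ SkelEdges E, p.1 ≠ p.2 → ∃! e : V × V, e ∈ E ∧ e.1 ∈ p.1 ∧ e.2 ∈ p.2)
    {x u u' : V} (hx : (StrongComp E x, StrongComp E x) ∉ SkelEdges E)
    (h : (u, x) ∈ E) (h' : (u', x) ∈ E) : u = u' := by
  have key : ∀ a, (a, x) ∈ E → a ∉ StrongComp E x := by
    intro a ha hax
    exact hx ⟨⟨x, rfl⟩, ⟨x, rfl⟩, a, hax, x, sc_self E x, ha⟩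
  exact (tree_edge htree huniq h h' (sc_self E x) (sc_self E x) (key u h) (key u' h')).1

lemma cyc_pred {V : Type*} {E : Set (V × V)} {C : Set V} (hC : IsSingleCycleOn C E)
    {u u' v : V} (h : (u, v) ∈ E) (h' : (u', v) ∈ E) (hu : u ∈ C) (hu' : u' ∈ C) (hv : v ∈ C) :
    u = u' := by
  obtain ⟨l, w, hl, hinj, _, hed⟩ := hC
  obtain ⟨t, ht, h1⟩ := (hed (u, v)).1 ⟨h, hu, hv⟩
  obtain ⟨t', ht', h2⟩ := (hed (u', v)).1 ⟨h', hu', hv⟩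
  simp only [Prod.mk.injEq] at h1 h2
  have h3 := hinj _ (Nat.mod_lt _ (by omega)) _ (Nat.mod_lt _ (by omega)) (h1.2.symm.trans h2.2)
  have h4 : t ≡ t' [MOD l] := Nat.ModEq.add_right_cancel' 1 h3
  have h5 := Nat.ModEq.eq_of_lt_of_lt h4 ht ht'
  rw [h1.1, h2.1, h5]

lemma back {V : Type*} {E : Set (V × V)} {W : Set V}
    (hU : ∀ u u' v, (u, v) ∈ E → (u', v) ∈ E → v ∈ W → u ∈ W → u' ∈ W → u = u')
    (w w' : ℕ → V) (i i' : ℕ) : ∀ t, w (i + t) = w' (i' + t) → w (i + t) ∈ W →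
    (∀ s < t, (w (i + s), w (i + s + 1)) ∈ E ∧ w (i + s) ∈ W) →
    (∀ s < t, (w' (i' + s), w' (i' + s + 1)) ∈ E ∧ w' (i' + s) ∈ W) → w i = w' i' := by
  intro t
  induction t with
  | zero => intro h _ _ _; exact h
  | succ t ih =>
    intro h hW h1 h2
    refine ih ?_ (h1 t (by omega)).2 (fun s hs => h1 s (by omega)) (fun s hs => h2 s (by omega))
    have e1 := h1 t (by omega)
    have e2 := h2 t (by omega)
    have h' : w (i + t + 1) = w' (i' + t + 1) := h
    exact hU _ _ (w (i + t + 1)) e1.1 (h' ▸ e2.1) hW e1.2 e2.2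

lemma closed_dvd {V : Type*} {E : Set (V × V)} {W : Set V}
    (hU : ∀ u u' v, (u, v) ∈ E → (u', v) ∈ E → v ∈ W → u ∈ W → u' ∈ W → u = u')
    (l : ℕ) (hl : 1 ≤ l) (c : ℕ → V) (hc : ∀ t, (c t, c (t + 1)) ∈ E ∧ c t ∈ W)
    (hinj : ∀ s t, c s = c t → s ≡ t [MOD l]) (hper : ∀ t, c (t + l) = c t) (s : ℕ)
    (z : ℕ → V) (i : ℕ) (hi : z i = c s) :
    ∀ m, z (i + m) = c s → (∀ t < m, (z (i + t), z (i + t + 1)) ∈ E ∧ z (i + t) ∈ W) → l ∣ m := by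
  intro m
  induction m using Nat.strong_induction_on with
  | _ m ih =>
    intro hm hz
    rcases Nat.eq_zero_or_pos m with h0 | h0
    · simp [h0]
    rcases Nat.lt_or_ge m l with h1 | h1
    · exfalso
      have e := back hU z c i (s + (l - m)) m
        (by rw [hm, show s + (l - m) + m = s + l by omega, hper]) (by rw [hm]; exact (hc s).2) hz
        (fun t _ => hc _)
      have h2 := hinj _ _ (hi.symm.trans e)
      have h3 : 0 ≡ l - m [MOD l] := Nat.ModEq.add_left_cancel' s h2
      have h4 := (Nat.modEq_zero_iff_dvd.1 h3.symm)
      have := Nat.le_of_dvd (by omega) h4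
      omega
    · have e := back hU z c (i + (m - l)) s l
        (by rw [show i + (m - l) + l = i + m by omega, hm, hper])
        (by rw [show i + (m - l) + l = i + m by omega, hm]; exact (hc s).2)
        (fun t ht => by
          have := hz (m - l + t) (by omega)
          simpa [add_assoc] using this)
        (fun t _ => hc _)
      have := ih (m - l) (by omega) e (fun t ht => hz t (by omega))
      have h5 := Nat.dvd_add this (dvd_refl l)
      rwa [show m - l + l = m by omega] at h5

lemma insert_cyc {V : Type*} {E : Set (V × V)} (l : ℕ) (c : ℕ → V)
    (hc : ∀ t, (c t, c (t + 1)) ∈ E) (hper : ∀ t, c (t + l) = c t) (s : ℕ)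
    (k k0 : ℕ) (hk : k0 ≤ k) (w : ℕ → V) (u v : V) (hw : IsWalk E k w u v) (hb : w k0 = c s) :
    ∃ w', IsWalk E (k + l) w' u v := by
  obtain ⟨h0, hv, h⟩ := hw
  refine ⟨fun t => if t < k0 then w t else if t < k0 + l then c (s + (t - k0)) else w (t - l),
    ?_, ?_, ?_⟩
  · rcases Nat.eq_zero_or_pos k0 with h1 | h1
    · subst h1
      rcases Nat.eq_zero_or_pos l with h2 | h2
      · simp [h2, h0]
      · simp [h2, ← hb, h0]
    · simp [h1, h0]
  · simp [show ¬ (k + l < k0) by omega, show ¬ (k + l < k0 + l) by omega, hv]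
  · intro t ht
    simp only
    rcases Nat.lt_or_ge t k0 with h1 | h1
    · rcases Nat.lt_or_ge (t + 1) k0 with h2 | h2
      · simp only [h1, h2, if_true]; exact h t (by omega)
      · have h3 : t + 1 = k0 := by omega
        have h4 := h t (by omega)
        rw [h3, hb] at h4
        rcases Nat.eq_zero_or_pos l with h5 | h5
        · simpa [h1, h3, h5, hb] using h4
        · simpa [h1, h3, h5] using h4
    · rcases Nat.lt_or_ge t (k0 + l) with h2 | h2
      · have h4 := hc (s + (t - k0))
        rcases Nat.lt_or_ge (t + 1) (k0 + l) with h3 | h3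
        · simp only [show ¬ t < k0 by omega, show ¬ t + 1 < k0 by omega, h2, h3, if_true, if_false]
          rwa [show s + (t + 1 - k0) = s + (t - k0) + 1 by omega]
        · simp only [show ¬ t < k0 by omega, show ¬ t + 1 < k0 by omega, h2,
            show ¬ t + 1 < k0 + l by omega, if_true, if_false]
          rw [show t + 1 - l = k0 by omega, hb, ← hper s]
          rwa [show s + (t - k0) + 1 = s + l by omega] at h4
      · simp only [show ¬ t < k0 by omega, show ¬ t + 1 < k0 by omega,
          show ¬ t < k0 + l by omega, show ¬ t + 1 < k0 + l by omega, if_false]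
        have := h (t - l) (by omega)
        rwa [show t - l + 1 = t + 1 - l by omega] at this

lemma core_lengths {n : ℕ} (E : Set (Node n × Node n))
    (hred : ReducedGraph n E)
    (C : Set (Node n)) (hC : C ∈ SkelNodes E) (hCnontriv : (C, C) ∈ SkelEdges E)
    (l : ℕ) (c : ℕ → Node n) (u0 : Node n) (hu0 : u0 ∈ C)
    (hcyc : IsCycle E l c u0) (hcycset : {x | ∃ t < l, c t = x} = C)
    (hreach : ReflTransGen (hStep E) none u0) :
    ∀ v ∈ VpPlus E C,
      (∀ k w, IsWalk E k w none v → ∃ w', IsWalk E (k + l) w' none v) ∧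
      (∀ k w k' w', IsWalk E k w none v → IsWalk E k' w' none v → k ≤ k' →
        l ∣ k' - k ∧ (k < k' → ∃ s ≤ k', ∃ t ≤ k', s ≠ t ∧ w' s = w' t)) := by
  obtain ⟨⟨hnone, _⟩, htree, _, huniq, hout⟩ := hred
  obtain ⟨x0, hx0⟩ := hC
  have hCu : C = StrongComp E u0 := by rw [hx0] at hu0 ⊢; exact (sc_eq hu0).symm
  clear hx0 x0
  obtain ⟨hl, ⟨hc0, hcl, hce⟩, hcinj⟩ := hcyc
  set W := VpPlus E C with hWdef
  have hW : ∀ v, v ∈ W ↔ ReflTransGen (hStep E) u0 v := by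
    intro v
    constructor
    · rintro ⟨u, hu, huv⟩
      rw [hCu] at hu
      exact (mem_sc.1 hu).1.trans (reach_iff.1 huv)
    · intro h
      exact ⟨u0, hu0, reach_iff.2 h⟩
  have hCm : ∀ v, v ∈ C ↔ ReflTransGen (hStep E) u0 v ∧ ReflTransGen (hStep E) v u0 := by
    intro v; rw [hCu, mem_sc]
  have hnp : ∀ a, (a, (none : Node n)) ∉ E := fun a ha => hnone _ ha rfl
  have hWs : ∀ u v, u ∈ W → ReflTransGen (hStep E) u v → v ∈ W := by
    intro u v hu huv; rw [hW] at hu ⊢; exact hu.trans huv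
  have hu0n : u0 ≠ none := by
    intro h
    have := hce (l - 1) (by omega)
    rw [show l - 1 + 1 = l by omega, hcl, h] at this
    exact hnp _ this
  have hnW : (none : Node n) ∉ W := by
    intro h
    rw [hW] at h
    rcases ReflTransGen.cases_tail h with h | ⟨a, _, ha⟩
    · exact hu0n h.symm
    · exact hnp _ ha
  have hnt : (StrongComp E u0, StrongComp E u0) ∈ SkelEdges E := hCu ▸ hCnontriv
  -- unique predecessors
  have hpredW : ∀ v ∈ W, v ∉ C → ∀ u u', (u, v) ∈ E → (u', v) ∈ E → u = u' := by
    intro v hv hvC u u' h h'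
    refine triv_pred htree huniq ?_ h h'
    intro hn
    have := nontriv_eq htree huniq hout ((hW v).1 hv) hnt hn
    rw [mem_sc] at this
    exact hvC ((hCm v).2 ⟨this.2, this.1⟩)
  have hpredA : ∀ v, ReflTransGen (hStep E) v u0 → v ∉ W → ∀ u u', (u, v) ∈ E → (u', v) ∈ E →
      u = u' := by
    intro v hv hvW u u' h h'
    refine triv_pred htree huniq ?_ h h'
    intro hn
    have := nontriv_eq htree huniq hout hv hn hnt
    rw [mem_sc] at this
    exact hvW ((hW v).2 this.1)
  have hU : ∀ u u' v, (u, v) ∈ E → (u', v) ∈ E → v ∈ W → u ∈ W → u' ∈ W → u = u' := by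
    intro u u' v h h' hv hu hu'
    by_cases hvC : v ∈ C
    · have hvu := ((hCm v).1 hvC).2
      exact cyc_pred (hout C hCnontriv).2 h h'
        ((hCm u).2 ⟨(hW u).1 hu, hvu.head h⟩) ((hCm u').2 ⟨(hW u').1 hu', hvu.head h'⟩) hvC
    · exact hpredW v hv hvC u u' h h'
  have hent : ∀ u v, (u, v) ∈ E → u ∉ W → v ∈ W → v ∈ C := by
    intro u v h hu hv
    by_contra hvC
    rcases ReflTransGen.cases_tail ((hW v).1 hv) with h1 | ⟨a, ha, hav⟩
    · exact hvC (h1 ▸ hu0)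
    · have := hpredW v hv hvC u a h hav
      exact hu (this ▸ (hW a).2 ha)
  have hedge : ∀ u v u' v', (u, v) ∈ E → (u', v') ∈ E → u ∉ W → u' ∉ W → v ∈ W → v' ∈ W →
      u = u' ∧ v = v' := by
    intro u v u' v' h h' hu hu' hv hv'
    have hCW : ∀ a, a ∈ StrongComp E u0 → a ∈ W := fun a ha => (hW a).2 (mem_sc.1 ha).1
    exact tree_edge htree huniq h h' (hCu ▸ hent u v h hu hv) (hCu ▸ hent u' v' h' hu' hv')
      (fun h => hu (hCW _ h)) (fun h => hu' (hCW _ h))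
  -- entry edge
  obtain ⟨a, b, hab, haW, hbW, hna⟩ := enter (D := W) hreach hnW ((hW u0).2 .refl)
  obtain ⟨k1, wa, hwa⟩ := reach_iff.2 hna
  have hbC : b ∈ C := hent a b hab haW hbW
  have hau : ReflTransGen (hStep E) a u0 := (((hCm b).1 hbC).2).head hab
  have hwalkA : ∀ k w, IsWalk E k w none a → ∀ t ≤ k,
      ReflTransGen (hStep E) (w t) u0 ∧ w t ∉ W := by
    intro k w hw t ht
    have h1 := walk_rtg (E := E) w t (k - t) (fun s hs => hw.2.2 (t + s) (by omega))
    rw [show t + (k - t) = k by omega, hw.2.1] at h1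
    exact ⟨h1.trans hau, fun h => haW (hWs _ _ h h1)⟩
  have hlenle : ∀ k w k' w', IsWalk E k w none a → IsWalk E k' w' none a → k ≤ k' → k = k' := by
    intro k w k' w' hw hw' hkk
    have hA := hwalkA k w hw
    have hA' := hwalkA k' w' hw'
    have e := back (E := E) (W := {x | ReflTransGen (hStep E) x u0 ∧ x ∉ W})
      (fun u u' v h h' hv _ _ => hpredA v hv.1 hv.2 u u' h h') w w' 0 (k' - k) k
      (by rw [show k' - k + k = k' by omega, hw'.2.1, zero_add, hw.2.1])
      (by rw [zero_add]; exact hA k le_rfl)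
      (fun s hs => by rw [zero_add]; exact ⟨hw.2.2 s hs, hA s (by omega)⟩)
      (fun s hs => ⟨hw'.2.2 _ (by omega), hA' _ (by omega)⟩)
    by_contra hne
    rw [hw.1] at e
    have := hw'.2.2 (k' - k - 1) (by omega)
    rw [show k' - k - 1 + 1 = k' - k by omega, ← e] at this
    exact hnp _ this
  have hlen : ∀ k w, IsWalk E k w none a → k = k1 := by
    intro k w hw
    rcases le_total k k1 with h | h
    · exact hlenle _ _ _ _ hw hwa h
    · exact (hlenle _ _ _ _ hwa hw h).symm
  have hpass : ∀ v ∈ W, ∀ k w, IsWalk E k w none v → k1 + 1 ≤ k ∧ w (k1 + 1) = b := by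
    intro v hv k w hw
    classical
    have hex : ∃ t, w t ∈ W := ⟨k, hw.2.1 ▸ hv⟩
    have hs := Nat.find_spec hex
    have hm := fun m => Nat.find_min (m := m) hex
    have hle : Nat.find hex ≤ k := Nat.find_min' hex (hw.2.1 ▸ hv)
    generalize Nat.find hex = t at hs hm hle
    have ht : t ≠ 0 := by
      rintro rfl
      exact hnW (hw.1 ▸ hs)
    obtain ⟨t, rfl⟩ := Nat.exists_eq_succ_of_ne_zero ht
    have hE := hw.2.2 t (by omega)
    obtain ⟨e1, e2⟩ := hedge _ _ _ _ hE hab (hm t (by omega)) haW hs hbW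
    have := hlen t w ⟨hw.1, e1, fun s hs => hw.2.2 s (by omega)⟩
    subst this
    exact ⟨hle, e2⟩
  have hafter : ∀ v ∈ W, ∀ k w, IsWalk E k w none v → ∀ t, k1 + 1 ≤ t → t ≤ k → w t ∈ W := by
    intro v hv k w hw t h1 h2
    have h3 := hpass v hv k w hw
    have h4 := walk_rtg (E := E) w (k1 + 1) (t - (k1 + 1)) (fun s hs => hw.2.2 _ (by omega))
    rw [show k1 + 1 + (t - (k1 + 1)) = t by omega, h3.2] at h4
    exact hWs _ _ hbW h4
  -- periodic cycle
  have hcC : ∀ t < l, c t ∈ C := fun t ht => hcycset ▸ ⟨t, ht, rfl⟩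
  have hCW : ∀ x ∈ C, x ∈ W := fun x hx => (hW x).2 ((hCm x).1 hx).1
  have hce' : ∀ t, (c (t % l), c ((t + 1) % l)) ∈ E := by
    intro t
    have h1 : t % l < l := Nat.mod_lt _ (by omega)
    have h2 := hce (t % l) h1
    rw [Nat.add_mod]
    rcases Nat.lt_or_ge (t % l + 1) l with h3 | h3
    · have h4 : 1 % l = 1 := Nat.mod_eq_of_lt (by omega)
      rwa [h4, Nat.mod_eq_of_lt h3]
    · have h4 : t % l + 1 = l := by omega
      rw [h4, hcl, ← hc0] at h2
      have h5 : (t % l + 1 % l) % l = 0 := by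
        rw [← Nat.add_mod, ← Nat.mod_add_mod, h4, Nat.mod_self]
      rwa [h5]
  have hper : ∀ t, c ((t + l) % l) = c (t % l) := by intro t; simp
  have hinj : ∀ s t, c (s % l) = c (t % l) → s ≡ t [MOD l] := fun s t h =>
    hcinj _ (Nat.mod_lt _ (by omega)) _ (Nat.mod_lt _ (by omega)) h
  obtain ⟨s, hs, hsb⟩ : ∃ s < l, c s = b := by
    rw [← hcycset] at hbC; exact hbC
  have hsb' : b = c (s % l) := by rw [Nat.mod_eq_of_lt hs, hsb]
  intro v hv
  refine ⟨?_, ?_⟩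
  · intro k w hw
    have h1 := hpass v hv k w hw
    exact insert_cyc l (fun t => c (t % l)) hce' hper s k (k1 + 1) h1.1 w none v hw
      (h1.2.trans hsb')
  · intro k w k' w' hw hw' hkk
    obtain ⟨h1, h2⟩ := hpass v hv k w hw
    obtain ⟨h1', h2'⟩ := hpass v hv k' w' hw'
    have e := back hU w w' (k1 + 1) (k1 + 1 + (k' - k)) (k - (k1 + 1))
      (by rw [show k1 + 1 + (k - (k1 + 1)) = k by omega,
            show k1 + 1 + (k' - k) + (k - (k1 + 1)) = k' by omega, hw.2.1, hw'.2.1])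
      (by rw [show k1 + 1 + (k - (k1 + 1)) = k by omega, hw.2.1]; exact hv)
      (fun t ht => ⟨hw.2.2 _ (by omega), hafter v hv k w hw _ (by omega) (by omega)⟩)
      (fun t ht => ⟨hw'.2.2 _ (by omega), hafter v hv k' w' hw' _ (by omega) (by omega)⟩)
    rw [h2] at e
    refine ⟨?_, ?_⟩
    · exact closed_dvd hU l hl (fun t => c (t % l))
        (fun t => ⟨hce' t, hCW _ (hcC _ (Nat.mod_lt _ (by omega)))⟩) hinj hper s w' (k1 + 1)
        (h2'.trans hsb') (k' - k) (e.symm.trans hsb')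
        (fun t ht => ⟨hw'.2.2 _ (by omega), hafter v hv k' w' hw' _ (by omega) (by omega)⟩)
    · intro hlt
      exact ⟨k1 + 1, h1', k1 + 1 + (k' - k), by omega, by omega, h2'.trans e⟩

end Helpers

/-- Lemma 4 of the paper: in a reduced graph, for every nontrivial
strong component `C` (a directed cycle of length `l`) and every `j ≥ 1` with
`j > d_p − ℓ_p`: the sets `V_p⁺(j)` are `ℓ_p`-periodic in `j`, and `V_p⁺` is the
disjoint union of `V_p⁺(j), …, V_p⁺(j + ℓ_p − 1)`. -/
theorem stmt11 {n : ℕ} (hn : 1 ≤ n) (E : Set (Node n × Node n))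
    (hred : ReducedGraph n E)
    (C : Set (Node n)) (hC : C ∈ SkelNodes E) (hCnontriv : (C, C) ∈ SkelEdges E)
    (l : ℕ) (c : ℕ → Node n) (u0 : Node n) (hu0 : u0 ∈ C)
    (hcyc : IsCycle E l c u0) (hcycset : {x | ∃ t < l, c t = x} = C)
    (dep : Node n → ℕ)
    (hdep : ∀ v : Node n, ∃ p : ℕ → Node n, IsPath E (dep v) p (none : Node n) v)
    (dp : ℕ) (hdp : IsGreatest {d : ℕ | ∃ v ∈ VpPlus E C, dep v = d} dp)
    (j : ℕ) (hj : 1 ≤ j) (hjd : (dp : ℤ) - (l : ℤ) < (j : ℤ)) :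
    VpPlus E C ∩ VSet E (j + l) = VpPlus E C ∩ VSet E j ∧
    (∀ v : Node n, v ∈ VpPlus E C ↔ ∃ k < l, v ∈ VpPlus E C ∩ VSet E (j + k)) ∧
    (∀ k < l, ∀ k' < l, k ≠ k' →
      (VpPlus E C ∩ VSet E (j + k)) ∩ (VpPlus E C ∩ VSet E (j + k')) = ∅) := by
  have hcore := core_lengths E hred C hC hCnontriv l c u0 hu0 hcyc hcycset (by
    obtain ⟨p, hp⟩ := hdep u0
    exact reach_iff.1 ⟨_, p, hp.1⟩)
  have hl : 1 ≤ l := hcyc.1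
  have hle : ∀ v ∈ VpPlus E C, dep v ≤ dp := fun v hv => hdp.2 ⟨v, hv, rfl⟩
  have hjd' : dp < j + l := by omega
  have hchar : ∀ v ∈ VpPlus E C, ∀ k, v ∈ VSet E k ↔ ∃ m, k = dep v + l * m := by
    intro v hv k
    obtain ⟨h1, h2⟩ := hcore v hv
    obtain ⟨p, hp⟩ := hdep v
    constructor
    · rintro ⟨w, hw⟩
      rcases Nat.lt_or_ge k (dep v) with h | h
      · obtain ⟨s, hs, t, ht, hst, he⟩ := (h2 _ _ _ _ hw hp.1 h.le).2 h
        exact absurd (hp.2 s hs t ht he) hst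
      · obtain ⟨m, hm⟩ := (h2 _ _ _ _ hp.1 hw h).1
        exact ⟨m, by omega⟩
    · rintro ⟨m, rfl⟩
      induction m with
      | zero => exact ⟨p, hp.1⟩
      | succ m ih =>
        obtain ⟨w, hw⟩ := ih
        obtain ⟨w', hw'⟩ := h1 _ _ hw
        exact ⟨w', by rwa [Nat.mul_succ, ← add_assoc]⟩
  refine ⟨?_, ?_, ?_⟩
  · ext v
    simp only [Set.mem_inter_iff]
    refine and_congr_right fun hv => ?_
    rw [hchar v hv, hchar v hv]
    have := hle v hv
    constructor
    · rintro ⟨m, hm⟩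
      rcases m with _ | m
      · omega
      · exact ⟨m, by rw [Nat.mul_succ] at hm; omega⟩
    · rintro ⟨m, hm⟩
      exact ⟨m + 1, by rw [Nat.mul_succ]; omega⟩
  · intro v
    constructor
    · intro hv
      have := hle v hv
      rcases Nat.lt_or_ge (dep v) j with h | h
      · have h1 := Nat.div_add_mod (j - dep v + (l - 1)) l
        have h2 := Nat.mod_lt (j - dep v + (l - 1)) (show l > 0 by omega)
        refine ⟨dep v + l * ((j - dep v + (l - 1)) / l) - j, ?_, hv, ?_⟩
        · omega
        · rw [hchar v hv]
          exact ⟨(j - dep v + (l - 1)) / l, by omega⟩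
      · refine ⟨dep v - j, by omega, hv, ?_⟩
        rw [hchar v hv]
        exact ⟨0, by omega⟩
    · rintro ⟨k, _, hv, _⟩
      exact hv
  · intro k hk k' hk' hne
    rw [Set.eq_empty_iff_forall_notMem]
    rintro v ⟨⟨hv, h1⟩, ⟨_, h2⟩⟩
    rw [hchar v hv] at h1 h2
    obtain ⟨m, hm⟩ := h1
    obtain ⟨m', hm'⟩ := h2
    apply hne
    have e : j + k ≡ j + k' [MOD l] := by
      rw [hm, hm']
      exact Nat.ModEq.add_left _ (by simp [Nat.ModEq])
    exact Nat.ModEq.eq_of_lt_of_lt (Nat.ModEq.add_left_cancel' j e) hk hk'
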